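/- arXiv:1006.4167 — 7 statements merged into one kernel-verified Lean document; each statement's English description precedes it below -/
import Mathlib

section
/- Let H₁, H₂, H₃ be complex Hilbert spaces and let T₁ : H₁ → H₂ and T₂ : H₂ → H₃ be densely defined, closed linear operators with range(T₁) ⊆ ker(T₂). Then dom(T₁*) ∩ dom(T₂) is dense in H₂. -/
open scoped LinearPMap InnerProductSpace

theorem aux_dense_adjoint {E F : Type*}
    [NormedAddCommGroup E] [InnerProductSpace ℂ E] [CompleteSpace E]
    [NormedAddCommGroup F] [InnerProductSpace ℂ F] [CompleteSpace F]
    (T : E →ₗ.[ℂ] F) (hc : T.IsClosed) : T.adjoint.domainᗮ = ⊥ := by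
  rw [Submodule.eq_bot_iff]
  intro z hz
  let K : Submodule ℂ (WithLp 2 (E × F)) :=
    T.graph.comap (WithLp.linearEquiv 2 ℂ (E × F)).toLinearMap
  have hK : IsClosed (K : Set (WithLp 2 (E × F))) :=
    IsClosed.preimage (WithLp.prod_continuous_ofLp 2 E F) hc
  have : CompleteSpace K := hK.completeSpace_coe
  have hmem : WithLp.toLp 2 ((0 : E), z) ∈ Kᗮᗮ := by
    rw [Submodule.mem_orthogonal]
    intro w hw
    rw [Submodule.mem_orthogonal'] at hw
    have hq : w.snd ∈ T.adjoint.domain := by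
      apply LinearPMap.mem_adjoint_domain_of_exists
      refine ⟨-w.fst, fun x => ?_⟩
      have h := hw (WithLp.toLp 2 ((x : E), T x)) (T.mem_graph x)
      rw [WithLp.prod_inner_apply] at h
      rw [inner_neg_left]
      exact neg_eq_of_add_eq_zero_right h
    have h2 := (Submodule.mem_orthogonal _ _).1 hz _ hq
    rw [WithLp.prod_inner_apply]
    simpa using h2
  rw [Submodule.orthogonal_orthogonal] at hmem
  exact T.graph_fst_eq_zero_snd (x := 0) (x' := z) hmem rfl

/-- Let `H₁, H₂, H₃` be complex Hilbert spaces and `T₁ : H₁ → H₂`,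
`T₂ : H₂ → H₃` densely defined, closed linear operators with `range T₁ ⊆ ker T₂`.
Then `dom T₁* ∩ dom T₂` is dense in `H₂`. -/
theorem dense_adjointDomain_inf_domain
    {H₁ H₂ H₃ : Type*}
    [NormedAddCommGroup H₁] [InnerProductSpace ℂ H₁] [CompleteSpace H₁]
    [NormedAddCommGroup H₂] [InnerProductSpace ℂ H₂] [CompleteSpace H₂]
    [NormedAddCommGroup H₃] [InnerProductSpace ℂ H₃] [CompleteSpace H₃]
    (T₁ : H₁ →ₗ.[ℂ] H₂) (T₂ : H₂ →ₗ.[ℂ] H₃)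
    (hd₁ : Dense (T₁.domain : Set H₁)) (hd₂ : Dense (T₂.domain : Set H₂))
    (hc₁ : T₁.IsClosed) (hc₂ : T₂.IsClosed)
    (hrange : LinearMap.range T₁.toFun ≤
      (LinearMap.ker T₂.toFun).map T₂.domain.subtype) :
    Dense ((T₁.adjoint.domain ⊓ T₂.domain : Submodule ℂ H₂) : Set H₂) := by
  have hz : ∀ D : Submodule ℂ H₂, Dense (D : Set H₂) ↔ Dᗮ = ⊥ := fun D => by
    rw [Submodule.dense_iff_topologicalClosure_eq_top, Submodule.topologicalClosure_eq_top_iff]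
  let N : Submodule ℂ H₂ := T₂.graph.comap (LinearMap.inl ℂ H₂ H₃)
  have hN : IsClosed (N : Set H₂) :=
    IsClosed.preimage (f := fun x : H₂ => (x, (0 : H₃))) (by fun_prop) hc₂
  have : CompleteSpace N := hN.completeSpace_coe
  have hNdom : N ≤ T₂.domain := fun x hx => LinearPMap.mem_domain_of_mem_graph hx
  have hTN : ∀ x : T₁.domain, T₁ x ∈ N := by
    intro x
    obtain ⟨y, hy, hyx⟩ := hrange ⟨x, rfl⟩
    have h := T₂.mem_graph y
    have hy0 : T₂ y = 0 := hy
    rw [hy0] at h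
    have e : (y : H₂) = T₁ x := hyx
    rw [e] at h
    exact h
  have hNo : Nᗮ ≤ T₁.adjoint.domain := by
    intro y hy
    apply LinearPMap.mem_adjoint_domain_of_exists
    refine ⟨0, fun x => ?_⟩
    rw [inner_zero_left]
    exact ((Submodule.mem_orthogonal' _ _).1 hy _ (hTN x)).symm
  rw [hz, Submodule.eq_bot_iff]
  intro x hx
  rw [Submodule.mem_orthogonal] at hx
  have h1 : N.starProjection x = 0 := by
    rw [← Submodule.mem_bot ℂ, ← aux_dense_adjoint T₁ hc₁, Submodule.mem_orthogonal]
    intro v hv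
    rw [← Submodule.inner_starProjection_left_eq_right]
    have hp : N.starProjection v ∈ N := Submodule.starProjection_apply_mem _ _
    refine hx _ ⟨?_, hNdom hp⟩
    have := T₁.adjoint.domain.sub_mem hv (hNo (N.sub_starProjection_mem_orthogonal v))
    simpa using this
  rw [← Submodule.mem_bot ℂ, ← (hz _).1 hd₂, Submodule.mem_orthogonal]
  intro u hu
  have hp : N.starProjection u ∈ N := Submodule.starProjection_apply_mem _ _
  have h := hx (u - N.starProjection u)
    ⟨hNo (N.sub_starProjection_mem_orthogonal u), T₂.domain.sub_mem hu (hNdom hp)⟩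
  rw [inner_sub_left, Submodule.inner_starProjection_left_eq_right, h1, inner_zero_right,
    sub_zero] at h
  exact h
end

section
/- Let H₁, H₂, H₃ be complex Hilbert spaces and let T₁ : H₁ → H₂ and T₂ : H₂ → H₃ be densely defined, closed linear operators with range(T₁) ⊆ ker(T₂). Let Q(u,v) = ⟨T₁*u, T₁*v⟩ + ⟨T₂u, T₂v⟩ with dom(Q) = dom(T₁*) ∩ dom(T₂). For f ∈ dom(Q), the following are equivalent: (i) there exists g ∈ H₂ such that Q(u,f) = ⟨u, g⟩ for all u ∈ dom(Q); (ii) T₂f ∈ dom(T₂*) and T₁*f ∈ dom(T₁). Moreover, in that case g = T₁T₁*f + T₂*T₂f. -/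
open scoped LinearPMap InnerProductSpace

theorem aux_double_adjoint {E F : Type*}
    [NormedAddCommGroup E] [InnerProductSpace ℂ E] [CompleteSpace E]
    [NormedAddCommGroup F] [InnerProductSpace ℂ F] [CompleteSpace F]
    (T : E →ₗ.[ℂ] F) (hd : Dense (T.domain : Set E)) (hc : T.IsClosed) (x : E) (y : F)
    (h : ∀ u : T.adjoint.domain, ⟪T.adjoint u, x⟫_ℂ = ⟪(u : F), y⟫_ℂ) :
    (x, y) ∈ T.graph := by
  let G : Submodule ℂ (WithLp 2 (E × F)) :=
    T.graph.comap (WithLp.linearEquiv 2 ℂ (E × F)).toLinearMap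
  have hG : IsClosed (G : Set (WithLp 2 (E × F))) :=
    IsClosed.preimage (WithLp.prod_continuous_ofLp 2 E F) hc
  have key : WithLp.toLp 2 (x, y) ∈ Gᗮᗮ := by
    rw [Submodule.mem_orthogonal]
    intro w hw
    rw [Submodule.mem_orthogonal'] at hw
    have h1 : ∀ z : T.domain, ⟪-w.fst, (z : E)⟫_ℂ = ⟪w.snd, T z⟫_ℂ := by
      intro z
      have h2 := hw (WithLp.toLp 2 ((z : E), T z)) (T.mem_graph z)
      rw [WithLp.prod_inner_apply] at h2
      simp only at h2
      rw [inner_neg_left]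
      exact (eq_neg_of_add_eq_zero_right h2).symm
    have hm : w.snd ∈ T.adjoint.domain := LinearPMap.mem_adjoint_domain_of_exists _ ⟨_, h1⟩
    have he : T.adjoint ⟨w.snd, hm⟩ = -w.fst := LinearPMap.adjoint_apply_eq hd _ h1
    have h3 := h ⟨w.snd, hm⟩
    rw [he, inner_neg_left] at h3
    rw [WithLp.prod_inner_apply]
    exact (by rw [← h3]; exact add_neg_cancel _ : ⟪w.fst, x⟫_ℂ + ⟪w.snd, y⟫_ℂ = 0)
  rw [Submodule.orthogonal_orthogonal_eq_closure, hG.submodule_topologicalClosure_eq] at key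
  exact key

theorem aux_key
    {H₁ H₂ H₃ : Type*}
    [NormedAddCommGroup H₁] [InnerProductSpace ℂ H₁] [CompleteSpace H₁]
    [NormedAddCommGroup H₂] [InnerProductSpace ℂ H₂] [CompleteSpace H₂]
    [NormedAddCommGroup H₃] [InnerProductSpace ℂ H₃] [CompleteSpace H₃]
    (T₁ : H₁ →ₗ.[ℂ] H₂) (T₂ : H₂ →ₗ.[ℂ] H₃)
    (hd₁ : Dense (T₁.domain : Set H₁))
    (hc₁ : T₁.IsClosed) (hc₂ : T₂.IsClosed)
    (hrange : LinearMap.range T₁.toFun ≤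
      (LinearMap.ker T₂.toFun).map T₂.domain.subtype)
    (f : H₂) (hf₁ : f ∈ T₁.adjoint.domain) (hf₂ : f ∈ T₂.domain) (g : H₂)
    (hg : ∀ (u : H₂) (hu₁ : u ∈ T₁.adjoint.domain) (hu₂ : u ∈ T₂.domain),
        ⟪T₁.adjoint ⟨u, hu₁⟩, T₁.adjoint ⟨f, hf₁⟩⟫_ℂ + ⟪T₂ ⟨u, hu₂⟩, T₂ ⟨f, hf₂⟩⟫_ℂ
          = ⟪u, g⟫_ℂ) :
    ∃ p : H₂, (T₁.adjoint ⟨f, hf₁⟩, p) ∈ T₁.graph ∧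
      ∀ u : T₂.domain, ⟪g - p, (u : H₂)⟫_ℂ = ⟪T₂ ⟨f, hf₂⟩, T₂ u⟫_ℂ := by
  let N : Submodule ℂ H₂ := (LinearMap.range T₁.toFun).topologicalClosure
  haveI : CompleteSpace N := (Submodule.isClosed_topologicalClosure _).completeSpace_coe
  have hN : ∀ y ∈ N, ∃ hy : y ∈ T₂.domain, T₂ ⟨y, hy⟩ = 0 := by
    intro y hy
    have hcl : IsClosed ((fun z : H₂ => ((z, 0) : H₂ × H₃)) ⁻¹' (T₂.graph : Set (H₂ × H₃))) :=
      IsClosed.preimage (by fun_prop) hc₂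
    have hsub : (LinearMap.range T₁.toFun : Set H₂) ⊆
        ((fun z : H₂ => ((z, 0) : H₂ × H₃)) ⁻¹' (T₂.graph : Set (H₂ × H₃))) := by
      intro z hz
      obtain ⟨k, hk, rfl⟩ := hrange hz
      have h0 : T₂ k = 0 := hk
      have := T₂.mem_graph k
      rw [h0] at this
      exact this
    have h1 : (y, (0 : H₃)) ∈ T₂.graph := closure_minimal hsub hcl hy
    rw [LinearPMap.mem_graph_iff] at h1
    obtain ⟨k, hk1, hk2⟩ := h1
    simp only at hk1 hk2
    subst hk1
    exact ⟨k.2, hk2⟩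
  have hO : ∀ w ∈ Nᗮ, ∃ hw : w ∈ T₁.adjoint.domain, T₁.adjoint ⟨w, hw⟩ = 0 := by
    intro w hw
    have h1 : ∀ z : T₁.domain, ⟪(0 : H₁), (z : H₁)⟫_ℂ = ⟪w, T₁ z⟫_ℂ := by
      intro z
      rw [inner_zero_left]
      exact ((Submodule.mem_orthogonal' _ _).1 hw _
        (Submodule.le_topologicalClosure _ ⟨z, rfl⟩)).symm
    have hm : w ∈ T₁.adjoint.domain := LinearPMap.mem_adjoint_domain_of_exists _ ⟨_, h1⟩
    exact ⟨hm, LinearPMap.adjoint_apply_eq hd₁ _ h1⟩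
  have hp : ∀ u, N.starProjection u ∈ N := fun u => N.starProjection_apply_mem u
  have hq : ∀ u, u - N.starProjection u ∈ Nᗮ := fun u => N.sub_starProjection_mem_orthogonal u
  refine ⟨N.starProjection g, aux_double_adjoint T₁ hd₁ hc₁ _ _ ?_, ?_⟩
  · intro u
    obtain ⟨a, ha⟩ := hO _ (hq u)
    obtain ⟨b, hb⟩ := hN _ (hp u)
    have hm : N.starProjection (u : H₂) ∈ T₁.adjoint.domain := by
      have := T₁.adjoint.domain.sub_mem u.2 a
      rwa [sub_sub_cancel] at this
    have he : T₁.adjoint ⟨_, hm⟩ = T₁.adjoint u := by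
      have h2 : (⟨_, a⟩ : T₁.adjoint.domain) = u - ⟨_, hm⟩ := rfl
      rw [h2, LinearPMap.map_sub] at ha
      exact (sub_eq_zero.1 ha).symm
    have h3 := hg _ hm b
    rw [he, hb, inner_zero_left, add_zero] at h3
    rw [h3]
    exact N.inner_starProjection_left_eq_right _ _
  · intro u
    obtain ⟨a, ha⟩ := hO _ (hq u)
    obtain ⟨b, hb⟩ := hN _ (hp u)
    have hm : (u : H₂) - N.starProjection (u : H₂) ∈ T₂.domain := T₂.domain.sub_mem u.2 b
    have he : T₂ ⟨_, hm⟩ = T₂ u := by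
      have h2 : (⟨_, hm⟩ : T₂.domain) = u - ⟨_, b⟩ := rfl
      rw [h2, LinearPMap.map_sub, hb, sub_zero]
    have h3 := hg _ a hm
    rw [he, ha, inner_zero_left, zero_add] at h3
    rw [← inner_conj_symm, ← inner_conj_symm (T₂ ⟨f, hf₂⟩), h3, inner_sub_left, inner_sub_right,
      N.inner_starProjection_left_eq_right]

/-- For `f ∈ dom Q = dom T₁* ∩ dom T₂`, the following are equivalent:
(i) there is `g ∈ H₂` with `Q(u, f) = ⟨u, g⟩` for all `u ∈ dom Q`;
(ii) `T₂ f ∈ dom T₂*` and `T₁* f ∈ dom T₁`.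
Moreover, in that case `g = T₁ T₁* f + T₂* T₂ f`. -/
theorem form_representation_iff
    {H₁ H₂ H₃ : Type*}
    [NormedAddCommGroup H₁] [InnerProductSpace ℂ H₁] [CompleteSpace H₁]
    [NormedAddCommGroup H₂] [InnerProductSpace ℂ H₂] [CompleteSpace H₂]
    [NormedAddCommGroup H₃] [InnerProductSpace ℂ H₃] [CompleteSpace H₃]
    (T₁ : H₁ →ₗ.[ℂ] H₂) (T₂ : H₂ →ₗ.[ℂ] H₃)
    (hd₁ : Dense (T₁.domain : Set H₁)) (hd₂ : Dense (T₂.domain : Set H₂))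
    (hc₁ : T₁.IsClosed) (hc₂ : T₂.IsClosed)
    (hrange : LinearMap.range T₁.toFun ≤
      (LinearMap.ker T₂.toFun).map T₂.domain.subtype)
    (f : H₂) (hf₁ : f ∈ T₁.adjoint.domain) (hf₂ : f ∈ T₂.domain) :
    ((∃ g : H₂, ∀ (u : H₂) (hu₁ : u ∈ T₁.adjoint.domain) (hu₂ : u ∈ T₂.domain),
        ⟪T₁.adjoint ⟨u, hu₁⟩, T₁.adjoint ⟨f, hf₁⟩⟫_ℂ + ⟪T₂ ⟨u, hu₂⟩, T₂ ⟨f, hf₂⟩⟫_ℂ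
          = ⟪u, g⟫_ℂ) ↔
      (T₂ ⟨f, hf₂⟩ ∈ T₂.adjoint.domain ∧ T₁.adjoint ⟨f, hf₁⟩ ∈ T₁.domain)) ∧
    (∀ g : H₂,
      (∀ (u : H₂) (hu₁ : u ∈ T₁.adjoint.domain) (hu₂ : u ∈ T₂.domain),
        ⟪T₁.adjoint ⟨u, hu₁⟩, T₁.adjoint ⟨f, hf₁⟩⟫_ℂ + ⟪T₂ ⟨u, hu₂⟩, T₂ ⟨f, hf₂⟩⟫_ℂ
          = ⟪u, g⟫_ℂ) →
      ∀ (ha : T₂ ⟨f, hf₂⟩ ∈ T₂.adjoint.domain) (hb : T₁.adjoint ⟨f, hf₁⟩ ∈ T₁.domain),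
        g = T₁ ⟨T₁.adjoint ⟨f, hf₁⟩, hb⟩ + T₂.adjoint ⟨T₂ ⟨f, hf₂⟩, ha⟩) := by
  refine ⟨⟨?_, ?_⟩, ?_⟩
  · rintro ⟨g, hg⟩
    obtain ⟨p, h1, h2⟩ := aux_key T₁ T₂ hd₁ hc₁ hc₂ hrange f hf₁ hf₂ g hg
    exact ⟨LinearPMap.mem_adjoint_domain_of_exists _ ⟨_, h2⟩,
      LinearPMap.mem_domain_of_mem_graph h1⟩
  · rintro ⟨ha, hb⟩
    refine ⟨T₁ ⟨T₁.adjoint ⟨f, hf₁⟩, hb⟩ + T₂.adjoint ⟨T₂ ⟨f, hf₂⟩, ha⟩, ?_⟩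
    intro u hu₁ hu₂
    have e1 := LinearPMap.adjoint_isFormalAdjoint hd₁ ⟨u, hu₁⟩ ⟨T₁.adjoint ⟨f, hf₁⟩, hb⟩
    have e2 := (LinearPMap.adjoint_isFormalAdjoint hd₂).symm ⟨u, hu₂⟩ ⟨T₂ ⟨f, hf₂⟩, ha⟩
    rw [inner_add_right]
    exact congrArg₂ (· + ·) e1 e2
  · intro g hg ha hb
    obtain ⟨p, h1, h2⟩ := aux_key T₁ T₂ hd₁ hc₁ hc₂ hrange f hf₁ hf₂ g hg
    have e2 : T₂.adjoint ⟨T₂ ⟨f, hf₂⟩, ha⟩ = g - p := LinearPMap.adjoint_apply_eq hd₂ _ h2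
    have e1 : T₁ ⟨T₁.adjoint ⟨f, hf₁⟩, hb⟩ = p :=
      LinearPMap.mem_graph_snd_inj _ (T₁.mem_graph ⟨_, hb⟩) h1 rfl
    rw [e1, e2, add_sub_cancel]
end

section
/- Let H₁, H₂, H₃ be complex Hilbert spaces and let T₁ : H₁ → H₂ and T₂ : H₂ → H₃ be densely defined, closed linear operators with range(T₁) ⊆ ker(T₂). Define the operator □ on H₂ by dom(□) = {f ∈ dom(T₁*) ∩ dom(T₂) : T₁*f ∈ dom(T₁) and T₂f ∈ dom(T₂*)} and □f = T₁T₁*f + T₂*T₂f. Then □ is self-adjoint (□ is densely defined and equals its own adjoint) and non-negative: ⟨□f, f⟩ = ‖T₁*f‖² + ‖T₂f‖² ≥ 0 for all f ∈ dom(□). -/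
open scoped LinearPMap InnerProductSpace

/-- The graph relation of the Laplacian `□ = T₁T₁* + T₂*T₂`:
`boxGraph T₁ T₂ f g` holds iff `f ∈ dom □` (i.e. `f ∈ dom T₁* ∩ dom T₂`,
`T₁* f ∈ dom T₁` and `T₂ f ∈ dom T₂*`) and `g = □ f = T₁ T₁* f + T₂* T₂ f`. -/
def boxGraph
    {H₁ H₂ H₃ : Type*}
    [NormedAddCommGroup H₁] [InnerProductSpace ℂ H₁] [CompleteSpace H₁]
    [NormedAddCommGroup H₂] [InnerProductSpace ℂ H₂] [CompleteSpace H₂]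
    [NormedAddCommGroup H₃] [InnerProductSpace ℂ H₃] [CompleteSpace H₃]
    (T₁ : H₁ →ₗ.[ℂ] H₂) (T₂ : H₂ →ₗ.[ℂ] H₃) (f g : H₂) : Prop :=
  ∃ (h₁ : f ∈ T₁.adjoint.domain) (h₂ : f ∈ T₂.domain)
    (h₃ : T₁.adjoint ⟨f, h₁⟩ ∈ T₁.domain) (h₄ : T₂ ⟨f, h₂⟩ ∈ T₂.adjoint.domain),
    g = T₁ ⟨T₁.adjoint ⟨f, h₁⟩, h₃⟩ + T₂.adjoint ⟨T₂ ⟨f, h₂⟩, h₄⟩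

theorem vn_decomp {E F : Type*}
    [NormedAddCommGroup E] [InnerProductSpace ℂ E] [CompleteSpace E]
    [NormedAddCommGroup F] [InnerProductSpace ℂ F] [CompleteSpace F]
    (T : E →ₗ.[ℂ] F) (hd : Dense (T.domain : Set E)) (hc : T.IsClosed) (a : E) (b : F) :
    ∃ (x : T.domain) (y : T.adjoint.domain),
      a = x - T.adjoint y ∧ b = T x + y := by
  let K : Submodule ℂ (WithLp 2 (E × F)) :=
    T.graph.comap (WithLp.linearEquiv 2 ℂ (E × F)).toLinearMap
  have hK : IsClosed (K : Set (WithLp 2 (E × F))) :=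
    IsClosed.preimage (WithLp.prod_continuous_ofLp 2 E F) hc
  have : CompleteSpace K := hK.completeSpace_coe
  obtain ⟨p, hp, q, hq, hpq⟩ := K.exists_add_mem_mem_orthogonal (WithLp.toLp 2 (a, b))
  have hp' : p.ofLp ∈ T.graph := hp
  rw [LinearPMap.mem_graph_iff] at hp'
  obtain ⟨x, hx1, hx2⟩ := hp'
  have key : ∀ u : T.domain, ⟪-q.fst, (u : E)⟫_ℂ = ⟪q.snd, T u⟫_ℂ := by
    intro u
    have hu : WithLp.toLp 2 ((u : E), T u) ∈ K := T.mem_graph u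
    have := Submodule.inner_left_of_mem_orthogonal hu hq
    rw [WithLp.prod_inner_apply] at this
    simp only [inner_neg_left]
    exact neg_eq_of_add_eq_zero_right this
  have hy := LinearPMap.mem_adjoint_domain_of_exists (T := T) q.snd ⟨_, key⟩
  refine ⟨x, ⟨q.snd, hy⟩, ?_, ?_⟩
  · rw [LinearPMap.adjoint_apply_eq hd ⟨q.snd, hy⟩ key, hx1, sub_neg_eq_add]
    exact congrArg (fun z => z.fst) hpq
  · rw [hx2]
    exact congrArg (fun z => z.snd) hpq

theorem pmap_add_aux {E F : Type*} [AddCommGroup E] [Module ℂ E] [AddCommGroup F] [Module ℂ F]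
    (T : E →ₗ.[ℂ] F) {f x z : E} (hx : x ∈ T.domain) (hz : z ∈ T.domain) (h0 : T ⟨z, hz⟩ = 0)
    (hf : f = x - z) : ∃ h : f ∈ T.domain, T ⟨f, h⟩ = T ⟨x, hx⟩ := by
  subst hf
  refine ⟨T.domain.sub_mem hx hz, ?_⟩
  have := T.map_sub ⟨x, hx⟩ ⟨z, hz⟩
  rw [h0, sub_zero] at this
  exact this

/-- The operator `□ = T₁T₁* + T₂*T₂` with domain
`{f ∈ dom T₁* ∩ dom T₂ : T₁* f ∈ dom T₁, T₂ f ∈ dom T₂*}` is densely defined,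
self-adjoint (its graph coincides with the graph of its adjoint), and non-negative:
`⟨□f, f⟩ = ‖T₁*f‖² + ‖T₂f‖² ≥ 0`. -/
theorem box_selfAdjoint_nonneg
    {H₁ H₂ H₃ : Type*}
    [NormedAddCommGroup H₁] [InnerProductSpace ℂ H₁] [CompleteSpace H₁]
    [NormedAddCommGroup H₂] [InnerProductSpace ℂ H₂] [CompleteSpace H₂]
    [NormedAddCommGroup H₃] [InnerProductSpace ℂ H₃] [CompleteSpace H₃]
    (T₁ : H₁ →ₗ.[ℂ] H₂) (T₂ : H₂ →ₗ.[ℂ] H₃)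
    (hd₁ : Dense (T₁.domain : Set H₁)) (hd₂ : Dense (T₂.domain : Set H₂))
    (hc₁ : T₁.IsClosed) (hc₂ : T₂.IsClosed)
    (hrange : LinearMap.range T₁.toFun ≤
      (LinearMap.ker T₂.toFun).map T₂.domain.subtype) :
    -- `□` is densely defined
    Dense {f : H₂ | ∃ g : H₂, boxGraph T₁ T₂ f g} ∧
    -- `□` is self-adjoint: its graph equals the graph of its (von Neumann) adjoint
    (∀ v w : H₂, boxGraph T₁ T₂ v w ↔
      ∀ f g : H₂, boxGraph T₁ T₂ f g → ⟪v, g⟫_ℂ = ⟪w, f⟫_ℂ) ∧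
    -- `□` is non-negative: `⟨□f, f⟩ = ‖T₁*f‖² + ‖T₂f‖² ≥ 0`
    (∀ f g : H₂, boxGraph T₁ T₂ f g →
      ∀ (h₁ : f ∈ T₁.adjoint.domain) (h₂ : f ∈ T₂.domain),
        ⟪g, f⟫_ℂ = ((‖T₁.adjoint ⟨f, h₁⟩‖ ^ 2 + ‖T₂ ⟨f, h₂⟩‖ ^ 2 : ℝ) : ℂ) ∧
        (0 : ℝ) ≤ ‖T₁.adjoint ⟨f, h₁⟩‖ ^ 2 + ‖T₂ ⟨f, h₂⟩‖ ^ 2) := by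
  have F1 := LinearPMap.adjoint_isFormalAdjoint hd₁
  have F2 := LinearPMap.adjoint_isFormalAdjoint hd₂
  have hz : ∀ u : T₁.domain, ∃ h : T₁ u ∈ T₂.domain, T₂ ⟨T₁ u, h⟩ = 0 := by
    intro u
    obtain ⟨s, hs, hs'⟩ := hrange ⟨u, rfl⟩
    have e : (s : H₂) = T₁ u := hs'
    have hm : T₁ u ∈ T₂.domain := e ▸ s.2
    refine ⟨hm, ?_⟩
    have : (⟨T₁ u, hm⟩ : T₂.domain) = s := Subtype.ext e.symm
    rw [this]
    exact hs
  have hz' : ∀ y : T₂.adjoint.domain, ∃ h : T₂.adjoint y ∈ T₁.adjoint.domain,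
      T₁.adjoint ⟨T₂.adjoint y, h⟩ = 0 := by
    intro y
    have k : ∀ u : T₁.domain, ⟪(0 : H₁), (u : H₁)⟫_ℂ = ⟪T₂.adjoint y, T₁ u⟫_ℂ := by
      intro u
      obtain ⟨h, h0⟩ := hz u
      have := F2 y ⟨T₁ u, h⟩
      rw [h0, inner_zero_right] at this
      rw [inner_zero_left]
      exact this.symm
    have hm := LinearPMap.mem_adjoint_domain_of_exists (T := T₁) _ ⟨_, k⟩
    exact ⟨hm, LinearPMap.adjoint_apply_eq hd₁ ⟨_, hm⟩ k⟩
  have surj : ∀ h : H₂, ∃ f g, boxGraph T₁ T₂ f g ∧ f + g = h := by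
    intro h
    obtain ⟨x, y', hx1, hx2⟩ := vn_decomp T₂ hd₂ hc₂ h 0
    obtain ⟨x', y, hy1, hy2⟩ := vn_decomp T₁ hd₁ hc₁ 0 h
    have e1 : T₂ x = ((-y' : T₂.adjoint.domain) : H₃) := by
      rw [Submodule.coe_neg]; exact eq_neg_of_add_eq_zero_left hx2.symm
    have e2 : T₁.adjoint y = x' := (sub_eq_zero.mp hy1.symm).symm
    have hx1' : h = x + T₂.adjoint (-y') := by rw [LinearPMap.map_neg, ← sub_eq_add_neg]; exact hx1
    obtain ⟨m1, z1⟩ := hz x'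
    obtain ⟨m2, z2⟩ := hz' (-y')
    obtain ⟨d2, f2⟩ := pmap_add_aux T₂ (f := x + y - h) x.2 m1 z1 (by rw [hy2]; abel)
    obtain ⟨d1, f1⟩ := pmap_add_aux T₁.adjoint (f := x + y - h) y.2 m2 z2 (by rw [hx1']; abel)
    have g1 : T₁.adjoint ⟨_, d1⟩ = x' := f1.trans e2
    have g2 : T₂ ⟨_, d2⟩ = ((-y' : T₂.adjoint.domain) : H₃) := f2.trans e1
    refine ⟨x + y - h, _, ⟨d1, d2, g1 ▸ x'.2, g2 ▸ (-y').2, rfl⟩, ?_⟩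
    have a1 : ∀ hh, T₁ ⟨T₁.adjoint ⟨_, d1⟩, hh⟩ = T₁ x' := fun hh => congrArg T₁ (Subtype.ext g1)
    have a2 : ∀ hh, T₂.adjoint ⟨T₂ ⟨_, d2⟩, hh⟩ = T₂.adjoint (-y') :=
      fun hh => congrArg T₂.adjoint (Subtype.ext g2)
    rw [a1, a2]
    have b1 : T₁ x' = h - y := by rw [hy2]; abel
    have b2 : T₂.adjoint (-y') = h - x := by rw [hx1']; abel
    rw [b1, b2]; abel
  have form : ∀ f g v w, boxGraph T₁ T₂ f g → ∀ (h₁ : f ∈ T₁.adjoint.domain) (h₂ : f ∈ T₂.domain)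
      (k₁ : v ∈ T₁.adjoint.domain) (k₂ : v ∈ T₂.domain), boxGraph T₁ T₂ v w →
      ⟪g, v⟫_ℂ = ⟪T₁.adjoint ⟨f, h₁⟩, T₁.adjoint ⟨v, k₁⟩⟫_ℂ + ⟪T₂ ⟨f, h₂⟩, T₂ ⟨v, k₂⟩⟫_ℂ := by
    rintro f g v w ⟨p1, p2, p3, p4, rfl⟩ h₁ h₂ k₁ k₂ -
    rw [inner_add_left]
    congr 1
    · exact F1.symm ⟨_, p3⟩ ⟨v, k₁⟩
    · exact F2 ⟨_, p4⟩ ⟨v, k₂⟩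
  have symm' : ∀ f g v w, boxGraph T₁ T₂ f g → boxGraph T₁ T₂ v w → ⟪v, g⟫_ℂ = ⟪w, f⟫_ℂ := by
    intro f g v w hf hv
    obtain ⟨p1, p2, -⟩ := id hf
    obtain ⟨q1, q2, -⟩ := id hv
    rw [form v w f g hv q1 q2 p1 p2 hf, ← inner_conj_symm, form f g v w hf p1 p2 q1 q2 hv,
      map_add, inner_conj_symm, inner_conj_symm]
  have nonneg : ∀ f g : H₂, boxGraph T₁ T₂ f g →
      ∀ (h₁ : f ∈ T₁.adjoint.domain) (h₂ : f ∈ T₂.domain),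
        ⟪g, f⟫_ℂ = ((‖T₁.adjoint ⟨f, h₁⟩‖ ^ 2 + ‖T₂ ⟨f, h₂⟩‖ ^ 2 : ℝ) : ℂ) := by
    intro f g hf h₁ h₂
    rw [form f g f g hf h₁ h₂ h₁ h₂ hf, inner_self_eq_norm_sq_to_K, inner_self_eq_norm_sq_to_K]
    push_cast
    rfl
  have fzero : ∀ f g, boxGraph T₁ T₂ f g → ⟪f + g, f⟫_ℂ = 0 → f = 0 := by
    intro f g hf o
    obtain ⟨p1, p2, -⟩ := id hf
    rw [inner_add_left, nonneg f g hf p1 p2, inner_self_eq_norm_sq_to_K] at o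
    have o' : ‖f‖ ^ 2 + (‖T₁.adjoint ⟨f, p1⟩‖ ^ 2 + ‖T₂ ⟨f, p2⟩‖ ^ 2) = 0 := by
      have o2 : ((‖f‖ : ℂ)) ^ 2 + ((‖T₁.adjoint ⟨f, p1⟩‖ ^ 2 + ‖T₂ ⟨f, p2⟩‖ ^ 2 : ℝ) : ℂ) = 0 := o
      exact_mod_cast o2
    have : ‖f‖ ^ 2 = 0 := by
      nlinarith [sq_nonneg ‖f‖, sq_nonneg ‖T₁.adjoint ⟨f, p1⟩‖, sq_nonneg ‖T₂ ⟨f, p2⟩‖]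
    simpa using this
  have gzero : ∀ g, boxGraph T₁ T₂ 0 g → g = 0 := by
    rintro g ⟨p1, p2, p3, p4, rfl⟩
    have a1 : T₁.adjoint ⟨0, p1⟩ = 0 := T₁.adjoint.map_zero
    have a2 : T₂ ⟨0, p2⟩ = 0 := T₂.map_zero
    have b1 : T₁ ⟨_, p3⟩ = T₁ 0 := congrArg T₁ (Subtype.ext a1)
    have b2 : T₂.adjoint ⟨_, p4⟩ = T₂.adjoint 0 := congrArg T₂.adjoint (Subtype.ext a2)
    rw [b1, b2, LinearPMap.map_zero, LinearPMap.map_zero, add_zero]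
  refine ⟨?_, ?_, fun f g hf h₁ h₂ => ⟨nonneg f g hf h₁ h₂, by positivity⟩⟩
  · -- `dom □` is the range of an everywhere defined inverse; check orthogonal complement
    let D : Submodule ℂ H₂ :=
      { carrier := {f : H₂ | ∃ g : H₂, boxGraph T₁ T₂ f g}
        zero_mem' := by
          obtain ⟨f, g, hf, e⟩ := surj 0
          obtain ⟨p1, p2, -⟩ := id hf
          have o : ⟪f + g, f⟫_ℂ = 0 := by rw [e, inner_zero_left]
          have f0 := fzero f g hf o
          exact ⟨g, f0 ▸ hf⟩
        add_mem' := by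
          rintro a b ⟨_, a1, a2, a3, a4, -⟩ ⟨_, b1, b2, b3, b4, -⟩
          have c1 := T₁.adjoint.map_add ⟨a, a1⟩ ⟨b, b1⟩
          have c2 := T₂.map_add ⟨a, a2⟩ ⟨b, b2⟩
          refine ⟨_, T₁.adjoint.domain.add_mem a1 b1, T₂.domain.add_mem a2 b2, ?_, ?_, rfl⟩
          · exact Set.mem_of_eq_of_mem c1 (T₁.domain.add_mem a3 b3)
          · exact Set.mem_of_eq_of_mem c2 (T₂.adjoint.domain.add_mem a4 b4)
        smul_mem' := by
          rintro c a ⟨_, a1, a2, a3, a4, -⟩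
          have c1 := T₁.adjoint.map_smul c ⟨a, a1⟩
          have c2 := T₂.map_smul c ⟨a, a2⟩
          refine ⟨_, T₁.adjoint.domain.smul_mem c a1, T₂.domain.smul_mem c a2, ?_, ?_, rfl⟩
          · exact Set.mem_of_eq_of_mem c1 (T₁.domain.smul_mem c a3)
          · exact Set.mem_of_eq_of_mem c2 (T₂.adjoint.domain.smul_mem c a4) }
    have hD : (D : Set H₂) = {f : H₂ | ∃ g : H₂, boxGraph T₁ T₂ f g} := rfl
    rw [← hD, Submodule.dense_iff_topologicalClosure_eq_top,
      Submodule.topologicalClosure_eq_top_iff, Submodule.eq_bot_iff]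
    intro h hh
    obtain ⟨f, g, hf, rfl⟩ := surj h
    have o : ⟪f + g, f⟫_ℂ = 0 :=
      Submodule.inner_left_of_mem_orthogonal (show f ∈ D from ⟨g, hf⟩) hh
    have f0 := fzero f g hf o
    subst f0
    rw [gzero g hf, add_zero]
  · intro v w
    refine ⟨fun hv f g hf => symm' f g v w hf hv, fun H => ?_⟩
    obtain ⟨f0, g0, hf0, e⟩ := surj (v + w)
    obtain ⟨f, g, hf, e'⟩ := surj (v - f0)
    have : ⟪v - f0, v - f0⟫_ℂ = 0 := by
      nth_rewrite 2 [← e']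
      rw [inner_add_right, inner_sub_left, inner_sub_left, H f g hf, symm' f g f0 g0 hf hf0,
        sub_add_sub_comm, ← inner_add_left, ← inner_add_left, e, sub_self]
    have hv : v = f0 := sub_eq_zero.mp (inner_self_eq_zero.mp this)
    subst hv
    rw [← add_left_cancel e]
    exact hf0
end

section
/- Let H₁, H₂, H₃ be complex Hilbert spaces and let T₁ : H₁ → H₂ and T₂ : H₂ → H₃ be densely defined, closed linear operators with range(T₁) ⊆ ker(T₂). If range(T₁) = ker(T₂) and range(T₂) is closed in H₃, then there exists a constant c > 0 such that ‖T₁*u‖² + ‖T₂u‖² ≥ c‖u‖² for all u ∈ dom(T₁*) ∩ dom(T₂). -/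
open scoped LinearPMap InnerProductSpace

theorem aux_bounded_preimage {E F : Type*}
    [NormedAddCommGroup E] [InnerProductSpace ℂ E] [CompleteSpace E]
    [NormedAddCommGroup F] [InnerProductSpace ℂ F] [CompleteSpace F]
    (T : E →ₗ.[ℂ] F) (hc : T.IsClosed)
    (hr : IsClosed (LinearMap.range T.toFun : Set F)) :
    ∃ C : ℝ, 0 < C ∧ ∀ y ∈ LinearMap.range T.toFun,
      ∃ x : T.domain, T x = y ∧ ‖(x : E)‖ ≤ C * ‖y‖ := by
  have hc' : IsClosed (T.graph : Set (E × F)) := hc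
  haveI : CompleteSpace T.graph := hc'.completeSpace_coe
  haveI : CompleteSpace (LinearMap.range T.toFun) := hr.completeSpace_coe
  let f : T.graph →L[ℂ] LinearMap.range T.toFun :=
    ((ContinuousLinearMap.snd ℂ E F).comp T.graph.subtypeL).codRestrict _ (by
      rintro ⟨⟨a, b⟩, h⟩
      obtain ⟨y, _, h2⟩ := (LinearPMap.mem_graph_iff T).1 h
      exact ⟨y, h2⟩)
  have hf : Function.Surjective f := by
    rintro ⟨_, ⟨x, rfl⟩⟩
    exact ⟨⟨((x : E), T x), T.mem_graph x⟩, rfl⟩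
  obtain ⟨C, hC, h⟩ := f.exists_preimage_norm_le hf
  refine ⟨C, hC, fun y hy => ?_⟩
  obtain ⟨⟨⟨a, b⟩, hab⟩, h1, h2⟩ := h ⟨y, hy⟩
  obtain ⟨x, hx1, hx2⟩ := (LinearPMap.mem_graph_iff T).1 hab
  refine ⟨x, ?_, ?_⟩
  · rw [hx2]
    exact congrArg Subtype.val h1
  · rw [hx1]
    exact (norm_fst_le (a, b)).trans h2

/-- If `range T₁ = ker T₂` and `range T₂` is closed in `H₃`, then there is
`c > 0` with `‖T₁*u‖² + ‖T₂u‖² ≥ c‖u‖²` for all `u ∈ dom T₁* ∩ dom T₂`. -/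
theorem coercive_of_range_eq_ker_and_closed_range
    {H₁ H₂ H₃ : Type*}
    [NormedAddCommGroup H₁] [InnerProductSpace ℂ H₁] [CompleteSpace H₁]
    [NormedAddCommGroup H₂] [InnerProductSpace ℂ H₂] [CompleteSpace H₂]
    [NormedAddCommGroup H₃] [InnerProductSpace ℂ H₃] [CompleteSpace H₃]
    (T₁ : H₁ →ₗ.[ℂ] H₂) (T₂ : H₂ →ₗ.[ℂ] H₃)
    (hd₁ : Dense (T₁.domain : Set H₁)) (hd₂ : Dense (T₂.domain : Set H₂))
    (hc₁ : T₁.IsClosed) (hc₂ : T₂.IsClosed)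
    (hrange : LinearMap.range T₁.toFun ≤
      (LinearMap.ker T₂.toFun).map T₂.domain.subtype)
    (heq : LinearMap.range T₁.toFun = (LinearMap.ker T₂.toFun).map T₂.domain.subtype)
    (hclosed : IsClosed (LinearMap.range T₂.toFun : Set H₃)) :
    ∃ c : ℝ, 0 < c ∧ ∀ (u : H₂) (hu₁ : u ∈ T₁.adjoint.domain) (hu₂ : u ∈ T₂.domain),
      c * ‖u‖ ^ 2 ≤ ‖T₁.adjoint ⟨u, hu₁⟩‖ ^ 2 + ‖T₂ ⟨u, hu₂⟩‖ ^ 2 := by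
  have hcl : IsClosed (LinearMap.range T₁.toFun : Set H₂) := by
    have hc' : IsClosed (T₂.graph : Set (H₂ × H₃)) := hc₂
    have : (LinearMap.range T₁.toFun : Set H₂) =
        (fun x : H₂ => (x, (0 : H₃))) ⁻¹' (T₂.graph : Set (H₂ × H₃)) := by
      rw [heq]
      ext x
      constructor
      · rintro ⟨y, hy, rfl⟩
        exact (LinearPMap.mem_graph_iff T₂).2 ⟨y, rfl, hy⟩
      · intro h
        obtain ⟨y, h1, h2⟩ := (LinearPMap.mem_graph_iff T₂).1 h
        exact ⟨y, h2, h1⟩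
    rw [this]
    exact hc'.preimage (by fun_prop)
  obtain ⟨C₁, hC₁, h₁⟩ := aux_bounded_preimage T₁ hc₁ hcl
  obtain ⟨C₂, hC₂, h₂⟩ := aux_bounded_preimage T₂ hc₂ hclosed
  refine ⟨1 / (3 * (C₁ ^ 2 + C₂ ^ 2)), by positivity, fun u hu₁ hu₂ => ?_⟩
  obtain ⟨v, hv, hvn⟩ := h₂ (T₂ ⟨u, hu₂⟩) ⟨⟨u, hu₂⟩, rfl⟩
  have hmem : u - v ∈ LinearMap.range T₁.toFun := by
    rw [heq]
    refine ⟨⟨u, hu₂⟩ - v, ?_, rfl⟩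
    change T₂ (⟨u, hu₂⟩ - v) = 0
    rw [LinearPMap.map_sub, hv, sub_self]
  obtain ⟨x, hx, hxn⟩ := h₁ _ hmem
  have hadj : ⟪T₁.adjoint ⟨u, hu₁⟩, (x : H₁)⟫_ℂ = ⟪u, T₁ x⟫_ℂ :=
    LinearPMap.adjoint_isFormalAdjoint hd₁ ⟨u, hu₁⟩ x
  have hsplit : ⟪u, u⟫_ℂ = ⟪u, (v : H₂)⟫_ℂ + ⟪T₁.adjoint ⟨u, hu₁⟩, (x : H₁)⟫_ℂ := by
    rw [hadj, hx, ← inner_add_right, add_sub_cancel]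
  generalize T₁.adjoint ⟨u, hu₁⟩ = A at *
  generalize T₂ ⟨u, hu₂⟩ = B at *
  have hn : ‖u‖ ^ 2 ≤ ‖u‖ * ‖(v : H₂)‖ + ‖A‖ * ‖(x : H₁)‖ := by
    calc ‖u‖ ^ 2 = ‖⟪u, u⟫_ℂ‖ := by
          rw [inner_self_eq_norm_sq_to_K]; simp
      _ ≤ _ := by
          rw [hsplit]
          exact (norm_add_le _ _).trans
            (add_le_add (norm_inner_le_norm _ _) (norm_inner_le_norm _ _))
  have hx' : ‖(x : H₁)‖ ≤ C₁ * (‖u‖ + C₂ * ‖B‖) :=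
    hxn.trans (mul_le_mul_of_nonneg_left ((norm_sub_le _ _).trans (by gcongr)) hC₁.le)
  have hn2 : ‖u‖ ^ 2 ≤ ‖u‖ * (C₂ * ‖B‖) + ‖A‖ * (C₁ * (‖u‖ + C₂ * ‖B‖)) :=
    hn.trans (by gcongr)
  have h3 : ‖u‖ ^ 2 ≤ 3 * ((C₁ * ‖A‖) ^ 2 + (C₂ * ‖B‖) ^ 2) := by
    nlinarith [sq_nonneg (‖u‖ - 2 * (C₂ * ‖B‖)), sq_nonneg (‖u‖ - 2 * (C₁ * ‖A‖)),
      sq_nonneg (C₁ * ‖A‖ - C₂ * ‖B‖)]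
  rw [one_div_mul_eq_div, div_le_iff₀ (by positivity)]
  nlinarith [mul_nonneg (sq_nonneg C₁) (sq_nonneg ‖B‖), mul_nonneg (sq_nonneg C₂) (sq_nonneg ‖A‖)]
end

section
/- Let H₁, H₂, H₃ be complex Hilbert spaces and let T₁ : H₁ → H₂ and T₂ : H₂ → H₃ be densely defined, closed linear operators with range(T₁) ⊆ ker(T₂). If there exists a constant c > 0 such that ‖T₁*u‖² + ‖T₂u‖² ≥ c‖u‖² for all u ∈ dom(T₁*) ∩ dom(T₂), then range(T₂*) = ker(T₁*). -/
open scoped LinearPMap InnerProductSpace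

/-- If there is `c > 0` with `‖T₁*u‖² + ‖T₂u‖² ≥ c‖u‖²` for all
`u ∈ dom T₁* ∩ dom T₂`, then `range T₂* = ker T₁*`. -/
theorem range_adjoint_eq_ker_adjoint_of_coercive
    {H₁ H₂ H₃ : Type*}
    [NormedAddCommGroup H₁] [InnerProductSpace ℂ H₁] [CompleteSpace H₁]
    [NormedAddCommGroup H₂] [InnerProductSpace ℂ H₂] [CompleteSpace H₂]
    [NormedAddCommGroup H₃] [InnerProductSpace ℂ H₃] [CompleteSpace H₃]
    (T₁ : H₁ →ₗ.[ℂ] H₂) (T₂ : H₂ →ₗ.[ℂ] H₃)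
    (hd₁ : Dense (T₁.domain : Set H₁)) (hd₂ : Dense (T₂.domain : Set H₂))
    (hc₁ : T₁.IsClosed) (hc₂ : T₂.IsClosed)
    (hrange : LinearMap.range T₁.toFun ≤
      (LinearMap.ker T₂.toFun).map T₂.domain.subtype)
    (c : ℝ) (hc : 0 < c)
    (hcoercive : ∀ (u : H₂) (hu₁ : u ∈ T₁.adjoint.domain) (hu₂ : u ∈ T₂.domain),
      c * ‖u‖ ^ 2 ≤ ‖T₁.adjoint ⟨u, hu₁⟩‖ ^ 2 + ‖T₂ ⟨u, hu₂⟩‖ ^ 2) :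
    LinearMap.range T₂.adjoint.toFun =
      (LinearMap.ker T₁.adjoint.toFun).map T₁.adjoint.domain.subtype := by
  have e1 := LinearPMap.adjoint_isFormalAdjoint hd₁
  have e2 := LinearPMap.adjoint_isFormalAdjoint hd₂
  have hr : ∀ x : T₁.domain, ∃ h : T₁ x ∈ T₂.domain, T₂ ⟨T₁ x, h⟩ = 0 := by
    intro x
    obtain ⟨z, hz, hz'⟩ := hrange ⟨x, rfl⟩
    have hz2 : (z : H₂) = T₁ x := hz'
    have hz3 : T₂ z = 0 := hz
    refine ⟨hz2 ▸ z.2, ?_⟩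
    rw [← hz3]
    congr 1
    exact Subtype.ext hz2.symm
  have hker : ∀ y : H₂, (∀ x : T₁.domain, ⟪y, T₁ x⟫_ℂ = 0) →
      ∃ h : y ∈ T₁.adjoint.domain, T₁.adjoint ⟨y, h⟩ = 0 := by
    intro y hy
    have h : y ∈ T₁.adjoint.domain :=
      LinearPMap.mem_adjoint_domain_of_exists y ⟨0, fun x => by rw [hy x, inner_zero_left]⟩
    exact ⟨h, LinearPMap.adjoint_apply_eq hd₁ _ fun x => by rw [inner_zero_left]; exact (hy x).symm⟩
  apply le_antisymm
  · rintro _ ⟨w, rfl⟩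
    obtain ⟨h, h'⟩ := hker (T₂.adjoint w) (fun x => by
      obtain ⟨a, b⟩ := hr x
      have := e2 w ⟨T₁ x, a⟩
      rw [b, inner_zero_right] at this
      exact this)
    exact ⟨⟨_, h⟩, h', rfl⟩
  · rintro _ ⟨f, hf, rfl⟩
    have hf0 : T₁.adjoint f = 0 := hf
    have hfx : ∀ x : T₁.domain, ⟪(f : H₂), T₁ x⟫_ℂ = 0 := by
      intro x
      rw [← e1 f x, hf0, inner_zero_left]
    let K : Submodule ℂ H₂ := (LinearMap.range T₁.toFun).topologicalClosure
    have hKc : IsClosed (K : Set H₂) := Submodule.isClosed_topologicalClosure _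
    have : CompleteSpace K := hKc.completeSpace_coe
    have hKg : ∀ k ∈ K, (k, (0 : H₃)) ∈ T₂.graph := by
      have hcl : IsClosed {k : H₂ | (k, (0 : H₃)) ∈ T₂.graph} :=
        IsClosed.preimage (f := fun k : H₂ => (k, (0 : H₃))) (by fun_prop) hc₂
      intro k hk
      refine closure_minimal ?_ hcl hk
      rintro _ ⟨x, rfl⟩
      obtain ⟨a, b⟩ := hr x
      have := T₂.mem_graph ⟨T₁ x, a⟩
      rw [b] at this
      exact this
    have hKf : ∀ k ∈ K, ⟪(f : H₂), k⟫_ℂ = 0 := by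
      have hcl : IsClosed {k : H₂ | ⟪(f : H₂), k⟫_ℂ = 0} :=
        isClosed_eq (by fun_prop) continuous_const
      intro k hk
      refine closure_minimal ?_ hcl hk
      rintro _ ⟨x, rfl⟩
      exact hfx x
    have hbound : ∀ u : T₂.domain, ‖⟪(f : H₂), (u : H₂)⟫_ℂ‖ ≤ ‖(f : H₂)‖ / √c * ‖T₂ u‖ := by
      intro u
      obtain ⟨k, hk, v, hv, huv⟩ := K.exists_add_mem_mem_orthogonal (u : H₂)
      obtain ⟨k', hk', hk0⟩ := (LinearPMap.mem_graph_iff _).1 (hKg k hk)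
      simp only at hk' hk0
      have hv2 : v = ((u - k' : T₂.domain) : H₂) := by
        rw [Submodule.coe_sub, huv, hk']; abel
      obtain ⟨h, h'⟩ := hker v (fun x => by
        have hm : T₁ x ∈ K := Submodule.le_topologicalClosure _ ⟨x, rfl⟩
        exact (Submodule.mem_orthogonal' _ _).1 hv _ hm)
      have hvd : v ∈ T₂.domain := hv2 ▸ (u - k').2
      have hT : T₂ ⟨v, hvd⟩ = T₂ u := by
        have : (⟨v, hvd⟩ : T₂.domain) = u - k' := Subtype.ext hv2
        rw [this, LinearPMap.map_sub, hk0, sub_zero]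
      have hco := hcoercive v h hvd
      rw [h', hT, norm_zero] at hco
      have hle : √c * ‖v‖ ≤ ‖T₂ u‖ := by
        refine abs_le_of_sq_le_sq' ?_ (norm_nonneg _) |>.2
        rw [mul_pow, Real.sq_sqrt hc.le]
        linarith
      have hs : 0 < √c := Real.sqrt_pos.2 hc
      rw [huv, inner_add_right, hKf k hk, zero_add]
      calc _ ≤ ‖(f : H₂)‖ * ‖v‖ := norm_inner_le_norm _ _
        _ = ‖(f : H₂)‖ / √c * (√c * ‖v‖) := by field_simp
        _ ≤ _ := by gcongr
    obtain ⟨s, hs⟩ := T₂.toFun.rangeRestrict.exists_rightInverse_of_surjective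
      (LinearMap.range_rangeRestrict _)
    have hs' : ∀ r, T₂ (s r) = (r : H₃) := fun r =>
      congrArg Subtype.val (LinearMap.congr_fun hs r)
    let φ : LinearMap.range T₂.toFun →L[ℂ] ℂ :=
      LinearMap.mkContinuous ((innerₛₗ ℂ (f : H₂)).comp (T₂.domain.subtype.comp s))
        (‖(f : H₂)‖ / √c) (fun r => by
          have := hbound (s r)
          rw [hs'] at this
          exact this)
    obtain ⟨g, hg, -⟩ := exists_extension_norm_eq _ φ
    let w : H₃ := (InnerProductSpace.toDual ℂ H₃).symm g
    have hw : ∀ u : T₂.domain, ⟪(f : H₂), (u : H₂)⟫_ℂ = ⟪w, T₂ u⟫_ℂ := by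
      intro u
      have h1 : ⟪w, T₂ u⟫_ℂ = g (T₂ u) := InnerProductSpace.toDual_symm_apply
      have h2 : g (T₂ u) = ⟪(f : H₂), (s ⟨T₂ u, ⟨u, rfl⟩⟩ : H₂)⟫_ℂ := hg ⟨T₂ u, ⟨u, rfl⟩⟩
      have h3 := hbound (u - s ⟨T₂ u, ⟨u, rfl⟩⟩)
      rw [LinearPMap.map_sub, hs', sub_self, norm_zero, mul_zero, Submodule.coe_sub,
        inner_sub_right] at h3
      rw [h1, h2]
      exact sub_eq_zero.1 (norm_le_zero_iff.1 h3)
    have hwd : w ∈ T₂.adjoint.domain := LinearPMap.mem_adjoint_domain_of_exists w ⟨f, hw⟩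
    exact ⟨⟨w, hwd⟩, LinearPMap.adjoint_apply_eq hd₂ _ hw⟩
end

section
/- Let H₁, H₂, H₃ be complex Hilbert spaces and let T₁ : H₁ → H₂ and T₂ : H₂ → H₃ be densely defined, closed linear operators with range(T₁) ⊆ ker(T₂). Suppose there exist a finite-dimensional subspace L ⊆ H₂ and a constant c > 0 such that ‖T₁*u‖² + ‖T₂u‖² ≥ c‖u‖² for all u ∈ dom(T₁*) ∩ dom(T₂) with u ⊥ L. Then range(T₁) and range(T₂) are closed, and ker(T₁*) ∩ ker(T₂) is finite-dimensional. -/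
open scoped LinearPMap InnerProductSpace

section helpers

variable {E F : Type*} [NormedAddCommGroup E] [InnerProductSpace ℂ E] [CompleteSpace E]
  [NormedAddCommGroup F] [InnerProductSpace ℂ F] [CompleteSpace F]

theorem aux_mem_graph_adjoint (T : E →ₗ.[ℂ] F) (hT : Dense (T.domain : Set E)) (q : F) (p : E) :
    (q, p) ∈ T.adjoint.graph ↔ ∀ x : T.domain, inner ℂ p (x : E) = inner ℂ q (T x) := by
  rw [LinearPMap.mem_graph_iff]
  constructor
  · rintro ⟨y, hy1, hy2⟩ x
    simp only at hy1 hy2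
    rw [← hy1, ← hy2]
    exact LinearPMap.adjoint_isFormalAdjoint hT y x
  · intro h
    exact ⟨⟨q, LinearPMap.mem_adjoint_domain_of_exists q ⟨p, h⟩⟩, rfl,
      LinearPMap.adjoint_apply_eq hT _ h⟩

theorem aux_mem_graph_of_adjoint (T : E →ₗ.[ℂ] F) (hT : Dense (T.domain : Set E))
    (hc : T.IsClosed) (x : E) (v : F)
    (h : ∀ u w, (u, w) ∈ T.adjoint.graph → inner ℂ w x = inner ℂ u v) :
    (x, v) ∈ T.graph := by
  let K : Submodule ℂ (WithLp 2 (E × F)) :=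
    T.graph.comap (WithLp.linearEquiv 2 ℂ (E × F)).toLinearMap
  have hK : IsClosed (K : Set (WithLp 2 (E × F))) :=
    IsClosed.preimage (WithLp.prod_continuous_ofLp 2 E F) hc
  have : WithLp.toLp 2 (x, v) ∈ K := by
    haveI : CompleteSpace K := hK.completeSpace_coe
    rw [← Submodule.orthogonal_orthogonal K, Submodule.mem_orthogonal]
    intro z hz
    have h1 : (z.snd, -z.fst) ∈ T.adjoint.graph := by
      rw [aux_mem_graph_adjoint T hT]
      intro y
      have : WithLp.toLp 2 ((y : E), T y) ∈ K := LinearPMap.mem_graph T y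
      have := (Submodule.mem_orthogonal' K z).1 hz _ this
      simp only [WithLp.prod_inner_apply] at this
      rw [inner_neg_left]
      exact neg_eq_of_add_eq_zero_right this
    have := h _ _ h1
    rw [inner_neg_left] at this
    simp only [WithLp.prod_inner_apply]
    exact (eq_neg_iff_add_eq_zero.1 (neg_eq_iff_eq_neg.1 this))
  exact this

theorem aux_closed_bdd (G : Submodule ℂ (E × F)) (hG : IsClosed (G : Set (E × F)))
    (c : ℝ) (hc : 0 < c) (h : ∀ x y, (x, y) ∈ G → c * ‖x‖ ^ 2 ≤ ‖y‖ ^ 2) :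
    IsClosed (G.map (LinearMap.snd ℂ E F) : Set F) := by
  have : CompleteSpace G := hG.completeSpace_coe
  let A : G →L[ℂ] F := (ContinuousLinearMap.snd ℂ E F).comp G.subtypeL
  have hA : AntilipschitzWith (Real.toNNReal (max 1 (√c)⁻¹)) A := by
    apply ContinuousLinearMap.antilipschitz_of_bound
    rintro ⟨⟨x, y⟩, hxy⟩
    have hb := h x y hxy
    have hs : 0 < √c := Real.sqrt_pos.2 hc
    have hb2 : √c * ‖x‖ ≤ ‖y‖ := by
      rw [← sq_le_sq₀ (by positivity) (norm_nonneg _), mul_pow, Real.sq_sqrt hc.le]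
      exact hb
    rw [Real.coe_toNNReal _ (le_trans zero_le_one (le_max_left _ _))]
    change ‖(x, y)‖ ≤ max 1 (√c)⁻¹ * ‖y‖
    rw [Prod.norm_mk]
    apply max_le
    · calc ‖x‖ ≤ (√c)⁻¹ * ‖y‖ := by
            rw [inv_mul_eq_div, le_div_iff₀ hs, mul_comm]; exact hb2
        _ ≤ _ := by gcongr; exact le_max_right _ _
    · calc ‖y‖ = 1 * ‖y‖ := (one_mul _).symm
        _ ≤ _ := by gcongr; exact le_max_left _ _
  have := hA.isClosed_range A.uniformContinuous
  convert this using 1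
  ext y
  constructor
  · rintro ⟨x, hx, rfl⟩
    exact ⟨⟨x, hx⟩, rfl⟩
  · rintro ⟨x, rfl⟩
    exact ⟨x.1, x.2, rfl⟩

theorem aux_closed (G : Submodule ℂ (E × F)) (hG : IsClosed (G : Set (E × F)))
    (L : Submodule ℂ E) [FiniteDimensional ℂ L] (c : ℝ) (hc : 0 < c)
    (h : ∀ x y, (x, y) ∈ G → x ∈ Lᗮ → c * ‖x‖ ^ 2 ≤ ‖y‖ ^ 2) :
    IsClosed (G.map (LinearMap.snd ℂ E F) : Set F) := by
  let P : G →ₗ[ℂ] L :=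
    (L.orthogonalProjectionOnto.toLinearMap).comp ((LinearMap.fst ℂ E F).comp G.subtype)
  have : FiniteDimensional ℂ (G ⧸ LinearMap.ker P) :=
    LinearEquiv.finiteDimensional P.quotKerEquivRange.symm
  have hco : (LinearMap.ker P).CoFG := this
  have key : IsClosed (((LinearMap.ker P).map ((LinearMap.snd ℂ E F).comp G.subtype) :
      Submodule ℂ F) : Set F) := by
    have h0 := aux_closed_bdd (G ⊓ (Lᗮ).comap (LinearMap.fst ℂ E F))
      (hG.inter ((Submodule.isClosed_orthogonal L).preimage continuous_fst)) c hc
      (fun x y hxy => h x y hxy.1 hxy.2)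
    have hiff : ∀ z : G, z ∈ LinearMap.ker P ↔ (z : E × F).1 ∈ Lᗮ := by
      intro z
      rw [LinearMap.mem_ker]
      have hz : P z = L.orthogonalProjectionOnto (z : E × F).1 := rfl
      rw [hz]
      exact Submodule.orthogonalProjectionOnto_eq_zero_iff (K := L) (v := (z : E × F).1)
    convert h0 using 1
    ext y
    constructor
    · rintro ⟨z, hz, rfl⟩
      exact ⟨z.1, ⟨z.2, (hiff z).1 hz⟩, rfl⟩
    · rintro ⟨z, ⟨hz, hz'⟩, rfl⟩
      exact ⟨⟨z, hz⟩, (hiff ⟨z, hz⟩).2 hz', rfl⟩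
  have := LinearMap.isClosed_range_of_isClosed_map_of_finiteDimensional_quotient key
  rw [LinearMap.range_comp, Submodule.range_subtype] at this
  exact this

end helpers

/-- If there are a finite-dimensional subspace `L ⊆ H₂` and `c > 0` with
`‖T₁*u‖² + ‖T₂u‖² ≥ c‖u‖²` for all `u ∈ dom T₁* ∩ dom T₂` with `u ⊥ L`, then
`range T₁` and `range T₂` are closed and `ker T₁* ∩ ker T₂` is finite-dimensional. -/
theorem closed_ranges_of_coercive_off_finiteDimensional
    {H₁ H₂ H₃ : Type*}
    [NormedAddCommGroup H₁] [InnerProductSpace ℂ H₁] [CompleteSpace H₁]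
    [NormedAddCommGroup H₂] [InnerProductSpace ℂ H₂] [CompleteSpace H₂]
    [NormedAddCommGroup H₃] [InnerProductSpace ℂ H₃] [CompleteSpace H₃]
    (T₁ : H₁ →ₗ.[ℂ] H₂) (T₂ : H₂ →ₗ.[ℂ] H₃)
    (hd₁ : Dense (T₁.domain : Set H₁)) (hd₂ : Dense (T₂.domain : Set H₂))
    (hc₁ : T₁.IsClosed) (hc₂ : T₂.IsClosed)
    (hrange : LinearMap.range T₁.toFun ≤
      (LinearMap.ker T₂.toFun).map T₂.domain.subtype)
    (L : Submodule ℂ H₂) (hL : FiniteDimensional ℂ L)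
    (c : ℝ) (hc : 0 < c)
    (hcoercive : ∀ (u : H₂) (hu₁ : u ∈ T₁.adjoint.domain) (hu₂ : u ∈ T₂.domain),
      u ∈ Lᗮ → c * ‖u‖ ^ 2 ≤ ‖T₁.adjoint ⟨u, hu₁⟩‖ ^ 2 + ‖T₂ ⟨u, hu₂⟩‖ ^ 2) :
    IsClosed (LinearMap.range T₁.toFun : Set H₂) ∧
    IsClosed (LinearMap.range T₂.toFun : Set H₃) ∧
    FiniteDimensional ℂ
      ((LinearMap.ker T₁.adjoint.toFun).map T₁.adjoint.domain.subtype ⊓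
        (LinearMap.ker T₂.toFun).map T₂.domain.subtype : Submodule ℂ H₂) := by
  have hc₁' : T₁.adjoint.IsClosed := LinearPMap.adjoint_isClosed hd₁
  have hL' : FiniteDimensional ℂ L := hL
  -- coercivity in graph form
  have hco : ∀ u w z, (u, w) ∈ T₁.adjoint.graph → (u, z) ∈ T₂.graph → u ∈ Lᗮ →
      c * ‖u‖ ^ 2 ≤ ‖w‖ ^ 2 + ‖z‖ ^ 2 := by
    intro u w z h1 h2 hu
    obtain ⟨⟨a, ha⟩, ha1, ha2⟩ := (LinearPMap.mem_graph_iff _).1 h1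
    obtain ⟨⟨b, hb⟩, hb1, hb2⟩ := (LinearPMap.mem_graph_iff _).1 h2
    simp only at ha1 ha2 hb1 hb2
    subst ha1
    subst hb1
    have := hcoercive _ ha hb hu
    rw [ha2, hb2] at this
    exact this
  have hker2 : ∀ u, (u, (0 : H₃)) ∈ T₂.graph ↔
      u ∈ (LinearMap.ker T₂.toFun).map T₂.domain.subtype := by
    intro u
    rw [LinearPMap.mem_graph_iff]
    constructor
    · rintro ⟨y, h1, h2⟩
      exact ⟨y, h2, h1⟩
    · rintro ⟨y, h2, h1⟩
      exact ⟨y, h1, h2⟩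
  have hker1 : ∀ u, (u, (0 : H₁)) ∈ T₁.adjoint.graph ↔
      u ∈ (LinearMap.ker T₁.adjoint.toFun).map T₁.adjoint.domain.subtype := by
    intro u
    rw [LinearPMap.mem_graph_iff]
    constructor
    · rintro ⟨y, h1, h2⟩
      exact ⟨y, h2, h1⟩
    · rintro ⟨y, h2, h1⟩
      exact ⟨y, h1, h2⟩
  let R : Submodule ℂ H₂ := (LinearMap.range T₁.toFun).topologicalClosure
  have hRc : IsClosed (R : Set H₂) := Submodule.isClosed_topologicalClosure _
  have hRcomp : CompleteSpace R := hRc.completeSpace_coe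
  have hR2 : ∀ u ∈ R, (u, (0 : H₃)) ∈ T₂.graph := by
    have : R ≤ T₂.graph.comap (LinearMap.inl ℂ H₂ H₃) := by
      apply Submodule.topologicalClosure_minimal
      · intro u hu
        exact (hker2 u).2 (hrange hu)
      · exact IsClosed.preimage (f := fun u : H₂ => (u, (0 : H₃))) (by fun_prop) hc₂
    exact this
  have hRo : ∀ u ∈ Rᗮ, (u, (0 : H₁)) ∈ T₁.adjoint.graph := by
    intro u hu
    rw [aux_mem_graph_adjoint T₁ hd₁]
    intro x
    rw [inner_zero_left]
    exact ((Submodule.mem_orthogonal' R u).1 hu _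
      (Submodule.le_topologicalClosure _ ⟨x, rfl⟩)).symm
  have hRo' : ∀ u, (u, (0 : H₁)) ∈ T₁.adjoint.graph → u ∈ Rᗮ := by
    intro u hu
    rw [aux_mem_graph_adjoint T₁ hd₁] at hu
    change u ∈ ((LinearMap.range T₁.toFun).topologicalClosure)ᗮ
    rw [Submodule.orthogonal_closure, Submodule.mem_orthogonal']
    rintro _ ⟨x, rfl⟩
    have := hu x
    rw [inner_zero_left] at this
    exact this.symm
  refine ⟨?_, ?_, ?_⟩
  · -- range T₁
    let G : Submodule ℂ (H₂ × H₁) := T₁.adjoint.graph ⊓ R.comap (LinearMap.fst ℂ H₂ H₁)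
    have hGc : IsClosed (G : Set (H₂ × H₁)) :=
      IsClosed.inter hc₁' (hRc.preimage continuous_fst)
    have hcl := aux_closed G hGc L c hc (by
      intro u w huw hu
      have := hco u w 0 huw.1 (hR2 u huw.2) hu
      simpa using this)
    have hGcomp : CompleteSpace G := hGc.completeSpace_coe
    let A : G →L[ℂ] H₁ := (ContinuousLinearMap.snd ℂ H₂ H₁).comp G.subtypeL
    have hAr : IsClosed (Set.range A) := by
      convert hcl using 1
      ext y
      constructor
      · rintro ⟨x, rfl⟩
        exact ⟨x.1, x.2, rfl⟩
      · rintro ⟨x, hx, rfl⟩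
        exact ⟨⟨x, hx⟩, rfl⟩
    have hAi : Function.Injective A := by
      rw [injective_iff_map_eq_zero]
      rintro ⟨⟨u, w⟩, huw⟩ h0
      have hw : w = 0 := h0
      subst hw
      have h1 : u ∈ R := huw.2
      have h2 : u ∈ Rᗮ := hRo' u huw.1
      have h3 : u = 0 := by
        have := (Submodule.mem_orthogonal R u).1 h2 u h1
        exact inner_self_eq_zero.1 this
      subst h3
      rfl
    let e := ContinuousLinearMap.equivRange hAi hAr
    have hrc : IsClosed ((LinearMap.range A.toLinearMap : Submodule ℂ H₁) : Set H₁) := hAr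
    have hrcomp : CompleteSpace (LinearMap.range A.toLinearMap) := hrc.completeSpace_coe
    suffices hsub : (R : Set H₂) ⊆ (LinearMap.range T₁.toFun : Set H₂) by
      have heq : (R : Set H₂) = (LinearMap.range T₁.toFun : Set H₂) :=
        Set.Subset.antisymm hsub (Submodule.le_topologicalClosure _)
      rw [← heq]
      exact hRc
    intro v hv
    let φ : StrongDual ℂ (LinearMap.range A.toLinearMap) :=
      (innerSL ℂ v).comp ((ContinuousLinearMap.fst ℂ H₂ H₁).comp
        (G.subtypeL.comp (e.symm : _ →L[ℂ] G)))
    let x := (InnerProductSpace.toDual ℂ (LinearMap.range A.toLinearMap)).symm φ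
    have hx : ∀ g : G, inner ℂ (x : H₁) (g : H₂ × H₁).2 = inner ℂ v (g : H₂ × H₁).1 := by
      intro g
      have h1 : inner ℂ x (e g) = φ (e g) := InnerProductSpace.toDual_symm_apply
      have h2 : φ (e g) = inner ℂ v (g : H₂ × H₁).1 := by
        change inner ℂ v ((e.symm (e g) : G) : H₂ × H₁).1 = _
        rw [ContinuousLinearEquiv.symm_apply_apply]
      rw [← h2, ← h1]
      rfl
    have hgr : ((x : H₁), v) ∈ T₁.graph := by
      apply aux_mem_graph_of_adjoint T₁ hd₁ hc₁
      intro u w huw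
      obtain ⟨a, ha, b, hb, rfl⟩ := Submodule.exists_add_mem_mem_orthogonal (K := R) u
      have haw : (a, w) ∈ T₁.adjoint.graph := by
        have := T₁.adjoint.graph.sub_mem huw (hRo b hb)
        simpa using this
      have h1 := hx ⟨(a, w), haw, ha⟩
      have h2 : inner ℂ w (x : H₁) = inner ℂ a v := by
        rw [← inner_conj_symm, ← inner_conj_symm a v]
        exact congrArg _ h1
      have h3 : inner ℂ b v = 0 := (Submodule.mem_orthogonal' R b).1 hb v hv
      rw [h2, inner_add_left, h3, add_zero]
    obtain ⟨y, _, hy⟩ := (LinearPMap.mem_graph_iff _).1 hgr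
    exact ⟨y, hy⟩
  · -- range T₂
    have hcl := aux_closed (T₂.graph ⊓ (Rᗮ).comap (LinearMap.fst ℂ H₂ H₃))
      (IsClosed.inter hc₂ ((Submodule.isClosed_orthogonal R).preimage continuous_fst)) L c hc (by
        intro u z huz hu
        have := hco u 0 z (hRo u huz.2) huz.1 hu
        simpa using this)
    convert hcl using 1
    ext z
    constructor
    · rintro ⟨y, rfl⟩
      have hy : ((y : H₂), T₂ y) ∈ T₂.graph := LinearPMap.mem_graph T₂ y
      obtain ⟨a, ha, b, hb, hab⟩ := Submodule.exists_add_mem_mem_orthogonal (K := R) (y : H₂)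
      refine ⟨(b, T₂ y), ⟨?_, hb⟩, rfl⟩
      have := T₂.graph.sub_mem hy (hR2 a ha)
      rw [hab] at this
      simpa using this
    · rintro ⟨⟨u, z⟩, ⟨h1, _⟩, rfl⟩
      obtain ⟨y, _, hy⟩ := (LinearPMap.mem_graph_iff _).1 h1
      exact ⟨y, hy⟩
  · -- finite dimension
    set N : Submodule ℂ H₂ := (LinearMap.ker T₁.adjoint.toFun).map T₁.adjoint.domain.subtype ⊓
        (LinearMap.ker T₂.toFun).map T₂.domain.subtype with hN
    let P : N →ₗ[ℂ] L := (L.orthogonalProjectionOnto.toLinearMap).comp N.subtype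
    apply FiniteDimensional.of_injective P
    rw [injective_iff_map_eq_zero]
    rintro ⟨u, hu⟩ h0
    have huL : u ∈ Lᗮ := Submodule.orthogonalProjectionOnto_eq_zero_iff.1 h0
    have := hco u 0 0 ((hker1 u).2 hu.1) ((hker2 u).2 hu.2) huL
    have h4 : ‖u‖ ^ 2 ≤ 0 := by
      simp only [norm_zero] at this
      nlinarith
    have h5 : u = 0 := by
      rw [← norm_eq_zero]
      exact pow_eq_zero_iff two_ne_zero |>.1 (le_antisymm h4 (sq_nonneg _))
    subst h5
    rfl
end

section
/- Let H be a Hilbert space, D a dense linear subspace of H, and L a finite-dimensional linear subspace of H with L ⊆ D. Then D ∩ L^⊥ is dense in the closed subspace L^⊥. -/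
/-- Let `H` be a Hilbert space, `D` a dense subspace, and `L` a
finite-dimensional subspace with `L ⊆ D`. Then `D ∩ Lᗮ` is dense in the closed
subspace `Lᗮ`. -/
theorem dense_inter_orthogonal_of_finiteDimensional
    {H : Type*} [NormedAddCommGroup H] [InnerProductSpace ℂ H] [CompleteSpace H]
    (D L : Submodule ℂ H) (hD : Dense (D : Set H)) [FiniteDimensional ℂ L]
    (hLD : L ≤ D) :
    (Lᗮ : Set H) ⊆ closure ((D ⊓ Lᗮ : Submodule ℂ H) : Set H) := by
  intro x hx
  have hc : Continuous (fun v : H => v - L.starProjection v) :=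
    continuous_id.sub L.starProjection.continuous
  have h0 : L.starProjection x = 0 := by
    have h1 := Submodule.starProjection_apply_mem L x
    have h2 := Submodule.sub_starProjection_mem_orthogonal (K := L) x
    have h3 : L.starProjection x ∈ Lᗮ := by
      have := Lᗮ.sub_mem hx h2
      simpa using this
    have h4 : L.starProjection x ∈ L ⊓ Lᗮ := ⟨h1, h3⟩
    rw [Submodule.inf_orthogonal_eq_bot] at h4
    simpa using h4
  have hm := map_mem_closure (f := fun v : H => v - L.starProjection v) hc (hD x)
    (t := ((D ⊓ Lᗮ : Submodule ℂ H) : Set H))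
    (fun v hv => ⟨D.sub_mem hv (hLD (Submodule.starProjection_apply_mem L v)),
      Submodule.sub_starProjection_mem_orthogonal v⟩)
  simpa only [h0, sub_zero] using hm
end
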